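/- Every graph H of treewidth tw contains a well-linked set of size tw+1. -/

import Mathlib

/-!
Fix a tree decomposition of optimal width `w` with as few bags of size `w + 1` as possible. Any
bag of size `w + 1` is then well-linked (and there is one, by the choice of `w`).

Indeed, suppose that `A` and `B` are subsets of equal size of such a bag, at the node `t`, that are
not linked by `|A|` disjoint paths. By Menger's theorem (`menger`) some set of fewer than `|A|`
vertices separates `A` from `B`. Root the tree at `t`, give each vertex its distance from `t`, the
smallest distance of a node whose bag contains it, and choose the separator `X`, of fewer than
`|A|` vertices, with least total distance. It is the intersection `L ∩ R` of the sides of a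
separation with `A ⊆ L` and `B ⊆ R`. Two copies of the tree, joined by an edge between the two
copies of `t`, carry a new decomposition (`IsTD.split`): the bags of the first copy are restricted
to `L`, those of the second to `R`, and each `x ∈ X` is added to the bags along the path from `t`
to the nearest bag containing it.

If a node `c` receives a nonempty set `N` of new vertices, then both of its new bags are smaller
than the old one (`IsTD.card_side`): replacing `N` in `X` by the part of the bag at `c` outside
`L` (or outside `R`) gives again a separator (`IsTD.separates_shift`), whose vertices are closer
to `t`, so by the choice of `X` that part has more than `|N|` elements. If `N` is empty, the new
bags are the two traces of the old one, and both can have size `w + 1` only if the old bag lies in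
`X`, which is too small. At `t` itself neither new bag has size `w + 1`, because `X` contains
neither `A` nor `B`. Hence the number of bags of size `w + 1` has decreased (`IsTD.improve`), a
contradiction.
-/



/-- `(T, bag)` is a tree decomposition of `G`. -/
def IsTreeDecomp {V : Type*} {n : ℕ} (G : SimpleGraph V) (T : SimpleGraph (Fin n))
    (bag : Fin n → Finset V) : Prop :=
  T.Connected ∧ T.IsAcyclic ∧
  (∀ v : V, ∃ b, v ∈ bag b) ∧
  (∀ u v : V, G.Adj u v → ∃ b, u ∈ bag b ∧ v ∈ bag b) ∧
  (∀ v : V, (T.induce {b | v ∈ bag b}).Connected)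

/-- The treewidth of a finite graph: the least `w` admitting a tree decomposition
with all bags of size at most `w + 1`. -/
noncomputable def treewidth {V : Type*} (G : SimpleGraph V) : ℕ :=
  sInf {w | ∃ (n : ℕ) (T : SimpleGraph (Fin n)) (bag : Fin n → Finset V),
    IsTreeDecomp G T bag ∧ ∀ b, (bag b).card ≤ w + 1}

/-- `Q` is well-linked in `G`: any two equal-sized disjoint subsets `A, B ⊆ Q` are joined
by `|A|` pairwise vertex-disjoint paths matching `A` to `B`. -/
def WellLinked {V : Type*} (G : SimpleGraph V) (Q : Finset V) : Prop :=
  ∀ A B : Finset V, A ⊆ Q → B ⊆ Q → Disjoint A B → A.card = B.card →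
    ∃ (g : A → B) (p : (a : A) → G.Walk a.1 (g a).1),
      Function.Bijective g ∧ (∀ a, (p a).IsPath) ∧
      ∀ a a' : A, a ≠ a' → List.Disjoint (p a).support (p a').support

open SimpleGraph

/-- `JoinIn G S x y`: some walk of `G` from `x` to `y` has all its vertices in `S`. -/
def JoinIn {V : Type*} (G : SimpleGraph V) (S : Set V) (x y : V) : Prop :=
  ∃ p : G.Walk x y, ∀ z ∈ p.support, z ∈ S

namespace JoinIn

variable {V W : Type*} {G G' : SimpleGraph V} {S S' : Set V} {x y z : V}

lemma refl (hx : x ∈ S) : JoinIn G S x x := ⟨.nil, by simpa using hx⟩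

lemma of_adj (h : G.Adj x y) (hx : x ∈ S) (hy : y ∈ S) : JoinIn G S x y :=
  ⟨h.toWalk, by simp [hx, hy]⟩

lemma symm (h : JoinIn G S x y) : JoinIn G S y x := by
  obtain ⟨p, hp⟩ := h
  exact ⟨p.reverse, by simpa using hp⟩

lemma trans (h : JoinIn G S x y) (h' : JoinIn G S y z) : JoinIn G S x z := by
  obtain ⟨p, hp⟩ := h
  obtain ⟨q, hq⟩ := h'
  refine ⟨p.append q, fun v hv => ?_⟩
  rcases (Walk.mem_support_append_iff _ _).1 hv with h | h
  exacts [hp _ h, hq _ h]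

lemma mono (h : JoinIn G S x y) (hS : ∀ z ∈ S, z ∈ S') : JoinIn G S' x y := by
  obtain ⟨p, hp⟩ := h
  exact ⟨p, fun v hv => hS _ (hp v hv)⟩

lemma mono_graph (h : JoinIn G S x y) (hG : G ≤ G') : JoinIn G' S x y := by
  obtain ⟨p, hp⟩ := h
  exact ⟨p.mapLe hG, by simpa using hp⟩

lemma map {H : SimpleGraph W} {R : Set W} (h : JoinIn G S x y) (f : G →g H)
    (hf : ∀ z ∈ S, f z ∈ R) : JoinIn H R (f x) (f y) := by
  obtain ⟨p, hp⟩ := h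
  refine ⟨p.map f, fun v hv => ?_⟩
  rw [Walk.support_map, List.mem_map] at hv
  obtain ⟨u, hu, rfl⟩ := hv
  exact hf _ (hp _ hu)

lemma left_mem (h : JoinIn G S x y) : x ∈ S := by
  obtain ⟨p, hp⟩ := h
  exact hp _ p.start_mem_support

lemma right_mem (h : JoinIn G S x y) : y ∈ S := h.symm.left_mem

lemma boundary (h : JoinIn G S x y) (U : Set V) (hx : x ∈ U) (hy : y ∉ U) :
    ∃ u v, G.Adj u v ∧ u ∈ U ∧ v ∉ U ∧ u ∈ S ∧ v ∈ S := by
  obtain ⟨p, hp⟩ := h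
  obtain ⟨d, hd, h1, h2⟩ := p.exists_boundary_dart U hx hy
  exact ⟨d.fst, d.snd, d.adj, h1, h2, hp _ (p.dart_fst_mem_support_of_mem_darts hd),
    hp _ (p.dart_snd_mem_support_of_mem_darts hd)⟩

lemma of_walk (p : G.Walk x y) (hp : ∀ v ∈ p.support, v ∈ S) (hz : z ∈ p.support) :
    JoinIn G S x z := by
  classical
  exact ⟨p.takeUntil z hz, fun v hv => hp v (p.support_takeUntil_subset_support hz hv)⟩

/-- Every vertex of a walk inside `S` is itself joined to the start inside `S`. -/
lemma strengthen (h : JoinIn G S x y) : JoinIn G {z | JoinIn G S x z} x y := by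
  obtain ⟨p, hp⟩ := h
  exact ⟨p, fun v hv => of_walk p hp hv⟩

end JoinIn

lemma induce_connected_iff {V : Type*} {G : SimpleGraph V} {S : Set V} :
    (G.induce S).Connected ↔ S.Nonempty ∧ ∀ x ∈ S, ∀ y ∈ S, JoinIn G S x y := by
  constructor
  · intro h
    obtain ⟨v⟩ := h.nonempty
    refine ⟨⟨v.1, v.2⟩, fun x hx y hy => ?_⟩
    obtain ⟨p⟩ := h.preconnected ⟨x, hx⟩ ⟨y, hy⟩
    exact JoinIn.map (S := Set.univ) ⟨p, fun _ _ => trivial⟩ (Embedding.induce S).toHom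
      fun z _ => z.2
  · rintro ⟨⟨v, hv⟩, h⟩
    have : Nonempty S := ⟨⟨v, hv⟩⟩
    refine ⟨fun x y => ?_⟩
    obtain ⟨p, hp⟩ := h x x.2 y y.2
    exact ⟨p.induce S hp⟩

/-! ### Menger's theorem for vertex sets -/

/-- `X` meets every walk of `G` from `A` to `B`. -/
def Separates {V : Type*} (G : SimpleGraph V) (A B X : Finset V) : Prop :=
  ∀ a ∈ A, ∀ b ∈ B, ¬ JoinIn G {v | v ∉ X} a b

/-- `G` has `k` pairwise vertex-disjoint paths from `A` to `B`. -/
def Linked {V : Type*} (G : SimpleGraph V) (A B : Finset V) (k : ℕ) : Prop :=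
  ∃ (a b : Fin k → V) (p : ∀ i, G.Walk (a i) (b i)), (∀ i, a i ∈ A) ∧ (∀ i, b i ∈ B) ∧
    (∀ i, (p i).IsPath) ∧ ∀ i j v, v ∈ (p i).support → v ∈ (p j).support → i = j

lemma Separates.symm {V : Type*} {G : SimpleGraph V} {A B X : Finset V} (h : Separates G A B X) :
    Separates G B A X := fun b hb a ha hba => h a ha b hb hba.symm

lemma Linked.of_index {V ι : Type*} [Fintype ι] {G : SimpleGraph V} {A B : Finset V} {k : ℕ}
    (hk : Fintype.card ι = k) (a b : ι → V) (p : ∀ i, G.Walk (a i) (b i))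
    (ha : ∀ i, a i ∈ A) (hb : ∀ i, b i ∈ B)
    (hd : ∀ i j v, v ∈ (p i).support → v ∈ (p j).support → i = j) : Linked G A B k := by
  classical
  let e := (Fintype.equivFinOfCardEq hk).symm
  refine ⟨fun i => a (e i), fun i => b (e i), fun i => (p (e i)).bypass, fun i => ha _,
    fun i => hb _, fun i => Walk.bypass_isPath _, fun i j v hi hj => e.injective ?_⟩
  exact hd _ _ v (Walk.support_bypass_subset_support _ hi)
    (Walk.support_bypass_subset_support _ hj)

lemma Linked.symm {V : Type*} {G : SimpleGraph V} {A B : Finset V} {k : ℕ}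
    (h : Linked G A B k) : Linked G B A k := by
  obtain ⟨a, b, p, ha, hb, hp, hd⟩ := h
  exact ⟨b, a, fun i => (p i).reverse, hb, ha, fun i => (hp i).reverse,
    fun i j v hi hj => hd i j v (by simpa using hi) (by simpa using hj)⟩

/-- When the target set has exactly `k` elements, the paths can be indexed by their last
vertices. -/
lemma Linked.index_target {V : Type*} {G : SimpleGraph V} {A X : Finset V} {k : ℕ}
    (h : Linked G A X k) (hX : X.card = k) :
    ∃ (a : X → V) (p : ∀ z : X, G.Walk (a z) z.1), (∀ z, a z ∈ A) ∧ (∀ z, (p z).IsPath) ∧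
      ∀ z z' v, v ∈ (p z).support → v ∈ (p z').support → z = z' := by
  obtain ⟨a, b, p, ha, hb, hp, hd⟩ := h
  let f : Fin k → X := fun i => ⟨b i, hb i⟩
  have hf : Function.Bijective f := by
    rw [Fintype.bijective_iff_injective_and_card]
    refine ⟨fun i j hij => ?_, by simp [hX]⟩
    have hij : b i = b j := congrArg Subtype.val hij
    exact hd i j (b i) (p i).end_mem_support (by rw [hij]; exact (p j).end_mem_support)
  let e := Equiv.ofBijective f hf
  have he : ∀ z : X, b (e.symm z) = z.1 := fun z =>
    congrArg Subtype.val (e.apply_symm_apply z)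
  refine ⟨fun z => a (e.symm z), fun z => (p (e.symm z)).copy rfl (he z), fun z => ha _,
    fun z => by simpa using hp _, fun z z' v hz hz' => e.symm.injective (hd _ _ v ?_ ?_)⟩
  · simpa using hz
  · simpa using hz'

lemma Linked.mono_graph {V : Type*} {G G' : SimpleGraph V} {A B : Finset V} {k : ℕ}
    (hG : G ≤ G') (h : Linked G A B k) : Linked G' A B k := by
  obtain ⟨a, b, p, ha, hb, hp, hd⟩ := h
  exact ⟨a, b, fun i => (p i).mapLe hG, ha, hb, fun i => (hp i).mapLe hG,
    fun i j v hi hj => hd i j v (by simpa using hi) (by simpa using hj)⟩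

/-- A common vertex of an `A`-path and a `B`-path, each meeting the separator `S` at most in its
last vertex, lies in `S`. -/
lemma mem_of_paths_meet {V : Type*} {G : SimpleGraph V} {A B S : Finset V} (hS : Separates G A B S)
    {a z b w v : V} (ha : a ∈ A) (hb : b ∈ B) {p : G.Walk a z} {q : G.Walk b w}
    (hp : p.IsPath) (hq : q.IsPath) (hpS : ∀ s ∈ p.support, s ∈ S → s = z)
    (hqS : ∀ s ∈ q.support, s ∈ S → s = w) (hvp : v ∈ p.support) (hvq : v ∈ q.support) :
    v ∈ S := by
  classical
  by_contra hv
  have key : ∀ {c d : V} {r : G.Walk c d}, r.IsPath → (∀ s ∈ r.support, s ∈ S → s = d) →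
      v ∈ r.support → JoinIn G {u | u ∉ S} c v := by
    intro c d r hr hrS hvr
    refine ⟨r.takeUntil v hvr, fun u hu huS => ?_⟩
    have hud := hrS u (r.support_takeUntil_subset_support hvr hu) huS
    subst hud
    exact Walk.endpoint_notMem_support_takeUntil hr hvr (fun h => hv (h ▸ huS)) hu
  exact hS a ha b hb ((key hp hpS hvp).trans (key hq hqS hvq).symm)

/-- If `S` separates `A` from `B` after deletion of the edge `xy`, and `y` is not reachable from
`A` there, then every `A`–`(S ∪ {x})` separator after the deletion is an `A`–`B` separator
of `G`. -/
lemma sep_of_sep_deleteEdge {V : Type*} [DecidableEq V] {G : SimpleGraph V} {A B S Z : Finset V}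
    {x y : V}
    (hS : Separates (G.deleteEdges {s(x, y)}) A B S)
    (hy : ∀ a ∈ A, ¬ JoinIn (G.deleteEdges {s(x, y)}) {v | v ∉ S} a y)
    (hZ : Separates (G.deleteEdges {s(x, y)}) A (insert x S) Z) : Separates G A B Z := by
  intro a ha b hb hab
  set G' := G.deleteEdges {s(x, y)} with hG'
  have hU : ∀ u, JoinIn G' {v | v ∉ Z} a u → u ∉ insert x S := fun u hu hux =>
    hZ a ha u hux hu
  have hUS : ∀ u, JoinIn G' {v | v ∉ Z} a u → JoinIn G' {v | v ∉ S} a u := fun u hu =>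
    hu.strengthen.mono fun z hz hzS => hU z hz (Finset.mem_insert_of_mem hzS)
  obtain ⟨u, v, huv, hu, hv, huZ, hvZ⟩ := hab.boundary {u | JoinIn G' {v | v ∉ Z} a u}
    (JoinIn.refl hab.left_mem) (fun h => hS a ha b hb (hUS b h))
  by_cases he : s(u, v) = s(x, y)
  · rw [Sym2.eq_iff] at he
    rcases he with ⟨rfl, rfl⟩ | ⟨rfl, rfl⟩
    · exact hU u hu (Finset.mem_insert_self _ _)
    · exact hy a ha (hUS u hu)
  · exact hv (hu.trans (JoinIn.of_adj (by simp [hG', huv, he]) huZ hvZ))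

/-- Menger's theorem, by deletion of an edge. -/
theorem menger {V : Type*} [Fintype V] (k : ℕ) (G : SimpleGraph V) :
    ∀ A B : Finset V, (∀ X, Separates G A B X → k ≤ X.card) → Linked G A B k := by
  classical
  induction G using WellFoundedLT.induction with
  | ind G ih =>
  intro A B hk
  by_cases hbot : G = ⊥
  · subst hbot
    have hs : k ≤ (A ∩ B).card := by
      refine hk _ fun a ha b hb hab => ?_
      obtain ⟨p, hp⟩ := hab
      cases p with
      | nil => exact hp a (by simp) (Finset.mem_inter.2 ⟨ha, hb⟩)
      | cons h _ => exact h
    obtain ⟨C, hC, hCk⟩ := Finset.exists_subset_card_eq hs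
    refine Linked.of_index (ι := C) (by simp [hCk]) (fun i => i.1) (fun i => i.1)
      (fun i => .nil) (fun i => (Finset.mem_inter.1 (hC i.2)).1)
      (fun i => (Finset.mem_inter.1 (hC i.2)).2) fun i j v hi hj => ?_
    simp only [Walk.support_nil, List.mem_singleton] at hi hj
    exact Subtype.ext (hi ▸ hj)
  · obtain ⟨x₀, y₀, hxy₀⟩ := ne_bot_iff_exists_adj.1 hbot
    by_cases hdel : ∀ X, Separates (G.deleteEdges {s(x₀, y₀)}) A B X → k ≤ X.card
    · refine (ih _ ?_ A B hdel).mono_graph (deleteEdges_le _)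
      refine (deleteEdges_le _).lt_of_ne fun h => ?_
      have : (G.deleteEdges {s(x₀, y₀)}).Adj x₀ y₀ := by rw [h]; exact hxy₀
      simp at this
    · push Not at hdel
      obtain ⟨S, hS, hSk⟩ := hdel
      -- Orient the deleted edge so that its tail is reachable from `A` off `S`.
      obtain ⟨x, y, hxy, hSxy, a₁, ha₁, hx, hy⟩ : ∃ x y, G.Adj x y ∧
          s(x₀, y₀) = s(x, y) ∧ ∃ a ∈ A,
          JoinIn (G.deleteEdges {s(x₀, y₀)}) {v | v ∉ S} a x ∧
          ∀ a ∈ A, ¬ JoinIn (G.deleteEdges {s(x₀, y₀)}) {v | v ∉ S} a y := by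
        have : ¬ Separates G A B S := fun h => absurd (hk S h) (by omega)
        unfold Separates at this
        push Not at this
        obtain ⟨a, ha, b, hb, hab⟩ := this
        obtain ⟨u, v, huv, ⟨a', ha', hu⟩, hv, huS, hvS⟩ := hab.boundary
          {u | ∃ a ∈ A, JoinIn (G.deleteEdges {s(x₀, y₀)}) {v | v ∉ S} a u}
          ⟨a, ha, JoinIn.refl hab.left_mem⟩
          (fun ⟨a', ha', h⟩ => hS a' ha' b hb h)
        by_cases he : s(u, v) = s(x₀, y₀)
        · exact ⟨u, v, huv, he.symm, a', ha', hu, fun a'' ha'' h => hv ⟨a'', ha'', h⟩⟩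
        · exact absurd ⟨a', ha', hu.trans (JoinIn.of_adj
            (by rw [deleteEdges_adj]; exact ⟨huv, he⟩) huS hvS)⟩ hv
      rw [hSxy] at hS hx hy
      have hlt : G.deleteEdges {s(x, y)} < G := by
        refine (deleteEdges_le _).lt_of_ne fun h => ?_
        have : (G.deleteEdges {s(x, y)}).Adj x y := by rw [h]; exact hxy
        simp at this
      have hswap : G.deleteEdges {s(y, x)} = G.deleteEdges {s(x, y)} := by rw [Sym2.eq_swap]
      have hyS : ∀ b ∈ B, ¬ JoinIn (G.deleteEdges {s(x, y)}) {v | v ∉ S} b x :=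
        fun b hb h => hS a₁ ha₁ b hb (hx.trans h.symm)
      have sepA : ∀ Z, Separates (G.deleteEdges {s(x, y)}) A (insert x S) Z → k ≤ Z.card :=
        fun Z hZ => hk Z (sep_of_sep_deleteEdge hS hy hZ)
      have sepB : ∀ Z, Separates (G.deleteEdges {s(x, y)}) B (insert y S) Z → k ≤ Z.card :=
        fun Z hZ => hk Z (sep_of_sep_deleteEdge (x := y) (y := x) (hswap ▸ hS.symm)
          (hswap ▸ hyS) (hswap ▸ hZ)).symm
      have hxk : k ≤ (insert x S).card := sepA _ fun a _ b hb h => h.right_mem hb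
      have hyk : k ≤ (insert y S).card := sepB _ fun a _ b hb h => h.right_mem hb
      have hxS : x ∉ S := hx.right_mem
      have hyS' : y ∉ S := fun h => by
        rw [Finset.insert_eq_of_mem h] at hyk
        omega
      have hxc : (insert x S).card = k := by
        rw [Finset.card_insert_of_notMem hxS] at hxk ⊢; omega
      have hyc : (insert y S).card = k := by
        rw [Finset.card_insert_of_notMem hyS'] at hyk ⊢; omega
      obtain ⟨a, p, ha, hp, hpd⟩ := (ih _ hlt A _ sepA).index_target hxc
      obtain ⟨b, q, hb, hq, hqd⟩ := (ih _ hlt B _ sepB).index_target hyc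
      -- The paths are joined at the vertices of `S`, and along the edge `xy`.
      let φ : ↥(insert x S) → ↥(insert y S) := fun z =>
        if h : z.1 ∈ S then ⟨z.1, Finset.mem_insert_of_mem h⟩
        else ⟨y, Finset.mem_insert_self _ _⟩
      have hzx : ∀ z : ↥(insert x S), z.1 ∉ S → z.1 = x := fun z hz =>
        (Finset.mem_insert.1 z.2).resolve_right hz
      have hφ : ∀ z, ∃ r : G.Walk z.1 (φ z).1, ∀ v ∈ r.support, v = z.1 ∨ v = (φ z).1 := by
        intro z
        by_cases h : z.1 ∈ S
        · have e : (φ z).1 = z.1 := by simp [φ, h]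
          rw [e]
          exact ⟨.nil, by simp⟩
        · have e : (φ z).1 = y := by simp [φ, h]
          rw [e, hzx z h]
          exact ⟨hxy.toWalk, by simp⟩
      have hφinj : Function.Injective φ := by
        intro z z' h
        by_cases h1 : z.1 ∈ S <;> by_cases h2 : z'.1 ∈ S
        · simp only [φ, h1, h2, dite_true, Subtype.mk.injEq] at h
          exact Subtype.ext h
        · simp only [φ, h1, h2, dite_true, dite_false, Subtype.mk.injEq] at h
          exact absurd (h ▸ h1) hyS'
        · simp only [φ, h1, h2, dite_true, dite_false, Subtype.mk.injEq] at h
          exact absurd (h ▸ h2) hyS'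
        · exact Subtype.ext ((hzx z h1).trans (hzx z' h2).symm)
      have hpS : ∀ z, ∀ s ∈ (p z).support, s ∈ S → s = z.1 := fun z s hs hsS =>
        (congrArg Subtype.val (hpd z ⟨s, Finset.mem_insert_of_mem hsS⟩ s hs
          (Walk.end_mem_support _))).symm
      have hqS : ∀ z, ∀ s ∈ (q z).support, s ∈ S → s = z.1 := fun z s hs hsS =>
        (congrArg Subtype.val (hqd z ⟨s, Finset.mem_insert_of_mem hsS⟩ s hs
          (Walk.end_mem_support _))).symm
      have hpq : ∀ z z' v, v ∈ (p z).support → v ∈ (q (φ z')).support → z = z' := by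
        intro z z' v hv hv'
        have hvS := mem_of_paths_meet hS (ha z) (hb _) (hp z) (hq _) (hpS z) (hqS _) hv hv'
        have h1 := hpS z v hv hvS
        have h2 := hqS _ v hv' hvS
        apply hφinj
        apply Subtype.ext
        rw [← h2]
        have : z.1 ∈ S := h1 ▸ hvS
        simp [φ, this, h1]
      choose r hr using hφ
      refine Linked.of_index (ι := ↥(insert x S)) (by rw [Fintype.card_coe, hxc])
        a (fun z => b (φ z))
        (fun z => ((p z).mapLe (deleteEdges_le _)).append
          ((r z).append ((q (φ z)).mapLe (deleteEdges_le _)).reverse)) ha (fun z => hb _) ?_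
      have hsupp : ∀ z v, v ∈ (((p z).mapLe (deleteEdges_le _)).append
          ((r z).append ((q (φ z)).mapLe (deleteEdges_le _)).reverse)).support →
          v ∈ (p z).support ∨ v ∈ (q (φ z)).support := by
        intro z v hv
        rw [Walk.mem_support_append_iff, Walk.mem_support_append_iff, Walk.support_reverse,
          List.mem_reverse, Walk.support_mapLe_eq_support, Walk.support_mapLe_eq_support] at hv
        rcases hv with h | h | h
        · exact Or.inl h
        · rcases hr z v h with rfl | rfl
          · exact Or.inl (Walk.end_mem_support _)
          · exact Or.inr (Walk.end_mem_support _)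
        · exact Or.inr h
      intro z z' v hz hz'
      rcases hsupp z v hz with h | h <;> rcases hsupp z' v hz' with h' | h'
      · exact hpd z z' v h h'
      · exact hpq z z' v h h'
      · exact (hpq z' z v h' h).symm
      · exact hφinj (hqd _ _ v h h')

/-- A set linked to `B` by as many disjoint paths as `A` and `B` have elements is matched to `B`
in the form required by `WellLinked`. -/
lemma Linked.matching {V : Type*} {G : SimpleGraph V} {A B : Finset V}
    (h : Linked G A B A.card) (hAB : A.card = B.card) :
    ∃ (g : A → B) (p : (a : A) → G.Walk a.1 (g a).1),
      Function.Bijective g ∧ (∀ a, (p a).IsPath) ∧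
      ∀ a a' : A, a ≠ a' → List.Disjoint (p a).support (p a').support := by
  obtain ⟨b, p, hb, hp, hd⟩ := h.symm.index_target rfl
  refine ⟨fun a => ⟨b a, hb a⟩, fun a => (p a).reverse, ?_, fun a => (hp a).reverse, ?_⟩
  · rw [Fintype.bijective_iff_injective_and_card]
    refine ⟨fun i j hij => ?_, by simp [hAB]⟩
    have hij : b i = b j := congrArg Subtype.val hij
    exact hd i j (b i) (p i).start_mem_support (by rw [hij]; exact (p j).start_mem_support)
  · intro a a' haa v hv hv'
    exact haa (hd a a' v (by simpa using hv) (by simpa using hv'))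

/-! ### Tree decompositions -/

/-- Tree decompositions indexed by an arbitrary type of nodes, with connectedness of the nodes
containing a given vertex expressed through walks. -/
def IsTD {V ι : Type*} (G : SimpleGraph V) (T : SimpleGraph ι) (bag : ι → Finset V) : Prop :=
  T.Connected ∧ T.IsAcyclic ∧
  (∀ v : V, ∃ b, v ∈ bag b) ∧
  (∀ u v : V, G.Adj u v → ∃ b, u ∈ bag b ∧ v ∈ bag b) ∧
  (∀ v x y, v ∈ bag x → v ∈ bag y → JoinIn T {b | v ∈ bag b} x y)

lemma IsTreeDecomp.isTD {V : Type*} {n : ℕ} {G : SimpleGraph V} {T : SimpleGraph (Fin n)}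
    {bag : Fin n → Finset V} (h : IsTreeDecomp G T bag) : IsTD G T bag :=
  ⟨h.1, h.2.1, h.2.2.1, h.2.2.2.1, fun v x y hx hy =>
    (induce_connected_iff.1 (h.2.2.2.2 v)).2 x hx y hy⟩

lemma IsTD.isTreeDecomp {V ι : Type*} {n : ℕ} {G : SimpleGraph V} {T : SimpleGraph ι}
    {bag : ι → Finset V} (h : IsTD G T bag) (e : ι ≃ Fin n) :
    IsTreeDecomp G (T.map e.toEmbedding) (fun b => bag (e.symm b)) := by
  obtain ⟨h1, h2, h3, h4, h5⟩ := h
  let f : T ≃g T.map e.toEmbedding := SimpleGraph.Iso.map e T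
  have hf : ∀ x, f x = e x := fun _ => rfl
  refine ⟨f.connected_iff.1 h1, f.isAcyclic_iff.1 h2, fun v => ?_, fun u v huv => ?_,
    fun v => ?_⟩
  · obtain ⟨b, hb⟩ := h3 v
    exact ⟨e b, by simpa using hb⟩
  · obtain ⟨b, hb, hb'⟩ := h4 u v huv
    exact ⟨e b, by simpa using hb, by simpa using hb'⟩
  · rw [induce_connected_iff]
    obtain ⟨b, hb⟩ := h3 v
    refine ⟨⟨e b, by simpa using hb⟩, fun x hx y hy => ?_⟩
    have := (h5 v _ _ hx hy).map (R := {b | v ∈ bag (e.symm b)}) f.toHom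
      (fun z hz => by
        change v ∈ bag (e.symm (e z))
        simpa using hz)
    have e1 : ∀ x, f.toHom (e.symm x) = x := fun x => e.apply_symm_apply x
    rwa [e1, e1] at this

/-- A walk of `G` avoiding the bag at `c` lifts to a walk of the tree avoiding `c`. -/
lemma IsTD.join_ne {V ι : Type*} {G : SimpleGraph V} {T : SimpleGraph ι}
    {bag : ι → Finset V} (h : IsTD G T bag) {S : Set V} {c : ι} (hS : ∀ z ∈ S, z ∉ bag c)
    {u v : V} (huv : JoinIn G S u v) {x y : ι} (hx : u ∈ bag x) (hy : v ∈ bag y) :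
    JoinIn T {b | b ≠ c} x y := by
  obtain ⟨p, hp⟩ := huv
  have base : ∀ z ∈ S, ∀ x y, z ∈ bag x → z ∈ bag y → JoinIn T {b | b ≠ c} x y :=
    fun z hz x y hx hy => (h.2.2.2.2 z x y hx hy).mono fun b hb hbc => hS z hz (hbc ▸ hb)
  induction p generalizing x with
  | nil => exact base _ (hp _ (by simp)) x y hx hy
  | cons hadj p ih =>
    obtain ⟨b, hb, hb'⟩ := h.2.2.2.1 _ _ hadj
    exact (base _ (hp _ (by simp)) x b hx hb).trans
      (ih hb' hy fun z hz => hp z (List.mem_cons_of_mem _ hz))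

/-- Distances and paths from the root `t` of a tree decomposition: `δ` is the distance of a node,
`s v` is a node closest to the root whose bag contains `v`, `d v` its distance, and `P v` the set
of nodes on the tree path from `t` to `s v`. -/
lemma IsTD.exists_rooting {V ι : Type*} {G : SimpleGraph V} {T : SimpleGraph ι}
    {bag : ι → Finset V} (h : IsTD G T bag) (t : ι) :
    ∃ (δ : ι → ℕ) (d : V → ℕ) (s : V → ι) (P : V → Set ι),
      (∀ v, v ∈ bag (s v)) ∧ (∀ v, s v ∈ P v) ∧ (∀ v, t ∈ P v) ∧
      (∀ v, ∀ b ∈ P v, JoinIn T (P v) t b) ∧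
      (∀ v, ∀ c ∈ P v, ¬ JoinIn T {b | b ≠ c} t (s v)) ∧
      (∀ v, ∀ c ∈ P v, v ∉ bag c → δ c < d v) ∧
      (∀ v c, v ∈ bag c → d v ≤ δ c) := by
  classical
  have hs : ∀ v, ∃ b, v ∈ bag b ∧ ∀ c, v ∈ bag c → T.dist t b ≤ T.dist t c := by
    intro v
    obtain ⟨b₀, hb₀⟩ := h.2.2.1 v
    exact exists_minimalFor_of_wellFoundedLT (fun b => v ∈ bag b) (T.dist t) ⟨b₀, hb₀⟩ |>.imp
      fun b hb => ⟨hb.1, fun c hc => by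
        by_contra hlt
        exact hlt (hb.2 hc (by omega))⟩
  choose s hs hmin using hs
  choose p hp hlen using fun v => h.1.exists_path_of_dist t (s v)
  refine ⟨T.dist t, fun v => T.dist t (s v), s, fun v => {b | b ∈ (p v).support}, hs,
    fun v => (p v).end_mem_support, fun v => (p v).start_mem_support,
    fun v b hb => JoinIn.of_walk _ (fun z hz => hz) hb, fun v c hc hj => ?_,
    fun v c hc hvc => ?_, hmin⟩
  · obtain ⟨q, hq⟩ := hj
    have := h.2.1.subsingleton_path t (s v)
    have hpq : p v = q.bypass := congrArg Subtype.val
      (Subsingleton.elim (⟨p v, hp v⟩ : T.Path t (s v)) ⟨q.bypass, q.bypass_isPath⟩)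
    refine hq c (Walk.support_bypass_subset_support _ ?_) rfl
    rw [← hpq]
    exact hc
  · have hne : c ≠ s v := fun e => hvc (e ▸ hs v)
    have h1 := Walk.length_takeUntil_lt_length hc hne
    have h2 := SimpleGraph.dist_le ((p v).takeUntil c hc)
    have h3 := hlen v
    change _ < T.dist t (s v)
    omega

/-! ### Gluing two copies of a tree -/

lemma isAcyclic_sum {ι κ : Type*} {T : SimpleGraph ι} {T' : SimpleGraph κ}
    (hT : T.IsAcyclic) (hT' : T'.IsAcyclic) : (T ⊕g T').IsAcyclic := by
  have key : ∀ {α β : Type _} (T : SimpleGraph α) (T' : SimpleGraph β) (u v : α),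
      ((T ⊕g T').deleteEdges {s(.inl u, .inl v)}).Reachable (.inl u) (.inl v) →
      (T.deleteEdges {s(u, v)}).Reachable u v := by
    intro α β T T' u v ⟨p⟩
    let f : α ⊕ β → α := Sum.elim id fun _ => u
    have : ∀ {x y} (p : ((T ⊕g T').deleteEdges {s(.inl u, .inl v)}).Walk x y),
        (T.deleteEdges {s(u, v)}).Reachable (f x) (f y) := by
      intro x y p
      induction p with
      | nil => exact Reachable.refl _
      | @cons x y z hadj p ih =>
        refine Reachable.trans ?_ ih
        rcases x with x | x <;> rcases y with y | y
        · exact Adj.reachable (by simpa [f] using hadj)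
        · simp at hadj
        · simp at hadj
        · exact Reachable.refl _
    exact this p
  have key' : ∀ {α β : Type _} (T : SimpleGraph α) (T' : SimpleGraph β) (u v : β),
      ((T ⊕g T').deleteEdges {s(.inr u, .inr v)}).Reachable (.inr u) (.inr v) →
      (T'.deleteEdges {s(u, v)}).Reachable u v := by
    intro α β T T' u v ⟨p⟩
    let f : α ⊕ β → β := Sum.elim (fun _ => u) id
    have : ∀ {x y} (p : ((T ⊕g T').deleteEdges {s(.inr u, .inr v)}).Walk x y),
        (T'.deleteEdges {s(u, v)}).Reachable (f x) (f y) := by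
      intro x y p
      induction p with
      | nil => exact Reachable.refl _
      | @cons x y z hadj p ih =>
        refine Reachable.trans ?_ ih
        rcases x with x | x <;> rcases y with y | y
        · exact Reachable.refl _
        · simp at hadj
        · simp at hadj
        · exact Adj.reachable (by simpa [f] using hadj)
    exact this p
  rw [isAcyclic_iff_forall_adj_isBridge] at hT hT' ⊢
  rintro (x | x) (y | y) hxy
  · rw [isBridge_iff]
    exact fun hr => hT (by simpa using hxy) (key T T' x y hr)
  · simp at hxy
  · simp at hxy
  · rw [isBridge_iff]
    exact fun hr => hT' (by simpa using hxy) (key' T T' x y hr)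

/-- Two copies of the tree of a decomposition, joined at the root `t`, decompose `G` along a
separation `(L, R)`: each copy keeps its side of the separation, and each vertex of `L ∩ R` is
added to the bags at the nodes of a path `P v` leading from `t` to its old bags. -/
lemma IsTD.split {V ι : Type*} [DecidableEq V] {G : SimpleGraph V} {T : SimpleGraph ι}
    {bag : ι → Finset V} (h : IsTD G T bag) (t : ι) (s : V → ι) (P : V → Set ι)
    (hs : ∀ v, v ∈ bag (s v)) (hsP : ∀ v, s v ∈ P v) (htP : ∀ v, t ∈ P v)
    (hP : ∀ v, ∀ b ∈ P v, JoinIn T (P v) t b)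
    {L R : Finset V} (hLR : ∀ v, v ∈ L ∨ v ∈ R)
    (hadj : ∀ u v, G.Adj u v → (u ∈ L ∧ v ∈ L) ∨ (u ∈ R ∧ v ∈ R))
    {W₁ W₂ : ι → Finset V}
    (hW₁ : ∀ c v, v ∈ W₁ c ↔ v ∈ L ∧ (v ∈ bag c ∨ v ∈ R ∧ c ∈ P v))
    (hW₂ : ∀ c v, v ∈ W₂ c ↔ v ∈ R ∧ (v ∈ bag c ∨ v ∈ L ∧ c ∈ P v)) :
    IsTD G ((T ⊕g T) ⊔ edge (.inl t) (.inr t)) (Sum.elim W₁ W₂) := by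
  let F : T →g ((T ⊕g T) ⊔ edge (.inl t) (.inr t)) :=
    (Hom.ofLE le_sup_left).comp Embedding.sumInl.toHom
  let F' : T →g ((T ⊕g T) ⊔ edge (.inl t) (.inr t)) :=
    (Hom.ofLE le_sup_left).comp Embedding.sumInr.toHom
  have hF : ∀ x, F x = .inl x := fun _ => rfl
  have hF' : ∀ x, F' x = .inr x := fun _ => rfl
  refine ⟨h.1.sum_sup_edge h.1, (isAcyclic_sum h.2.1 h.2.1).sup_edge_of_not_reachable
    (not_reachable_sum_inl_inr _ _), fun v => ?_, fun u v huv => ?_, fun v x y hx hy => ?_⟩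
  · obtain ⟨b, hb⟩ := h.2.2.1 v
    rcases hLR v with hv | hv
    · exact ⟨.inl b, (hW₁ b v).2 ⟨hv, Or.inl hb⟩⟩
    · exact ⟨.inr b, (hW₂ b v).2 ⟨hv, Or.inl hb⟩⟩
  · obtain ⟨b, hb, hb'⟩ := h.2.2.2.1 u v huv
    rcases hadj u v huv with ⟨hu, hv⟩ | ⟨hu, hv⟩
    · exact ⟨.inl b, (hW₁ b u).2 ⟨hu, Or.inl hb⟩, (hW₁ b v).2 ⟨hv, Or.inl hb'⟩⟩
    · exact ⟨.inr b, (hW₂ b u).2 ⟨hu, Or.inl hb⟩, (hW₂ b v).2 ⟨hv, Or.inl hb'⟩⟩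
  · by_cases hX : v ∈ L ∧ v ∈ R
    · obtain ⟨hL, hR⟩ := hX
      have conn : ∀ b, v ∈ bag b ∨ b ∈ P v → JoinIn T {c | v ∈ bag c ∨ c ∈ P v} t b := by
        have hp : ∀ b ∈ P v, JoinIn T {c | v ∈ bag c ∨ c ∈ P v} t b := fun b hb =>
          (hP v b hb).mono fun z hz => Or.inr hz
        rintro b (hb | hb)
        · exact (hp _ (hsP v)).trans ((h.2.2.2.2 v _ _ (hs v) hb).mono fun z hz => Or.inl hz)
        · exact hp b hb
      have hl : ∀ z, v ∈ bag z ∨ z ∈ P v → v ∈ W₁ z := fun z hz =>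
        (hW₁ z v).2 ⟨hL, hz.imp id fun h => ⟨hR, h⟩⟩
      have hr : ∀ z, v ∈ bag z ∨ z ∈ P v → v ∈ W₂ z := fun z hz =>
        (hW₂ z v).2 ⟨hR, hz.imp id fun h => ⟨hL, h⟩⟩
      have main : ∀ x, v ∈ Sum.elim W₁ W₂ x → JoinIn ((T ⊕g T) ⊔ edge (.inl t) (.inr t))
          {b | v ∈ Sum.elim W₁ W₂ b} (.inl t) x := by
        rintro (x | x) hx
        · exact (conn x (((hW₁ x v).1 hx).2.imp id And.right)).map F hl
        · have h1 := (conn x (((hW₂ x v).1 hx).2.imp id And.right)).map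
            (R := {b | v ∈ Sum.elim W₁ W₂ b}) F' hr
          refine JoinIn.trans (JoinIn.of_adj ?_ ?_ ?_) h1
          · rw [hF', sup_adj, edge_adj]
            exact Or.inr (by simp)
          · exact hl t (Or.inr (htP v))
          · exact hr t (Or.inr (htP v))
      exact (main x hx).symm.trans (main y hy)
    · rcases x with x | x <;> rcases y with y | y
      · have h1 := (hW₁ x v).1 hx
        have h2 := (hW₁ y v).1 hy
        have hR : v ∉ R := fun hR => hX ⟨h1.1, hR⟩
        refine (h.2.2.2.2 v x y (h1.2.resolve_right fun h => hR h.1)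
          (h2.2.resolve_right fun h => hR h.1)).map F fun z hz => (hW₁ z v).2 ⟨h1.1, Or.inl hz⟩
      · exact absurd ⟨((hW₁ x v).1 hx).1, ((hW₂ y v).1 hy).1⟩ hX
      · exact absurd ⟨((hW₁ y v).1 hy).1, ((hW₂ x v).1 hx).1⟩ hX
      · have h1 := (hW₂ x v).1 hx
        have h2 := (hW₂ y v).1 hy
        have hL : v ∉ L := fun hL => hX ⟨hL, h1.1⟩
        refine (h.2.2.2.2 v x y (h1.2.resolve_right fun h => hL h.1)
          (h2.2.resolve_right fun h => hL h.1)).map F' fun z hz => (hW₂ z v).2 ⟨h1.1, Or.inl hz⟩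

/-! ### Reducing the number of large bags -/

/-- Every separator is the intersection of the two sides of a separation of the graph. -/
lemma Separates.exists_sides {V : Type*} [Fintype V] {G : SimpleGraph V} {A B X : Finset V}
    (h : Separates G A B X) :
    ∃ L R : Finset V, A ⊆ L ∧ B ⊆ R ∧ (∀ v, v ∈ X ↔ v ∈ L ∧ v ∈ R) ∧ (∀ v, v ∈ L ∨ v ∈ R) ∧
      ∀ u v, G.Adj u v → (u ∈ L ∧ v ∈ L) ∨ (u ∈ R ∧ v ∈ R) := by
  classical
  let C : Finset V := {v | ∃ a ∈ A, JoinIn G {v | v ∉ X} a v}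
  have hC : ∀ v, v ∈ C ↔ ∃ a ∈ A, JoinIn G {v | v ∉ X} a v := fun v => by simp [C]
  have hCX : ∀ v ∈ C, v ∉ X := fun v hv => by
    obtain ⟨a, _, ha⟩ := (hC v).1 hv
    exact ha.right_mem
  have hstep : ∀ u v, G.Adj u v → u ∈ C → v ∉ X → v ∈ C := fun u v huv hu hv => by
    obtain ⟨a, haA, ha⟩ := (hC u).1 hu
    exact (hC v).2 ⟨a, haA, ha.trans (JoinIn.of_adj huv (hCX u hu) hv)⟩
  refine ⟨C ∪ X, Cᶜ, fun a ha => ?_, fun b hb => ?_, fun v => ?_, fun v => ?_,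
    fun u v huv => ?_⟩
  · by_cases haX : a ∈ X
    · simp [haX]
    · exact Finset.mem_union_left _ ((hC a).2 ⟨a, ha, JoinIn.refl haX⟩)
  · rw [Finset.mem_compl, hC]
    rintro ⟨a, ha, hab⟩
    exact h a ha b hb hab
  · have := hCX v
    simp only [Finset.mem_union, Finset.mem_compl]
    tauto
  · simp only [Finset.mem_union, Finset.mem_compl]
    tauto
  · have h1 := hstep u v huv
    have h2 := hstep v u huv.symm
    have h3 := hCX u
    have h4 := hCX v
    simp only [Finset.mem_union, Finset.mem_compl]
    tauto

/-- Let `N` be a set of vertices of the separator `X` whose subtrees are cut off from the root `t`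
by the node `c`. Replacing `N` by the vertices of the bag at `c` lying strictly on the side of
`B` gives another separator: after its last visit to `X`, which is in `N`, an `A`–`B` walk has to
get past the bag at `c`. -/
lemma IsTD.separates_shift {V ι : Type*} [DecidableEq V] {G : SimpleGraph V} {T : SimpleGraph ι}
    {bag : ι → Finset V} (h : IsTD G T bag) {t c : ι} {s : V → ι} (hs : ∀ v, v ∈ bag (s v))
    {A B X L R N : Finset V} (hB : B ⊆ bag t) (hAL : A ⊆ L) (hBR : B ⊆ R)
    (hX : ∀ v, v ∈ X ↔ v ∈ L ∧ v ∈ R)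
    (hadj : ∀ u v, G.Adj u v → (u ∈ L ∧ v ∈ L) ∨ (u ∈ R ∧ v ∈ R))
    (hN : ∀ v ∈ N, v ∉ bag c ∧ ¬ JoinIn T {b | b ≠ c} t (s v)) :
    Separates G A B ((X \ N) ∪ (bag c \ L)) := by
  intro a ha b hb hab
  set X' := (X \ N) ∪ (bag c \ L) with hX'
  have hXN : ∀ v, v ∉ X' → v ∈ X → v ∈ N := fun v hv hvX => by
    by_contra hvN
    exact hv (by simp [hX', hvX, hvN])
  have hbagL : ∀ v, v ∉ X' → v ∉ L → v ∉ bag c := fun v hv hvL hvc =>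
    hv (by simp [hX', hvL, hvc])
  have bad : ∀ v ∈ N, ¬ JoinIn G {u | u ∉ bag c} b v := fun v hv hj =>
    (hN v hv).2 (h.join_ne (fun _ hz => hz) hj (hB hb) (hs v))
  have hbX' : b ∉ X' := hab.right_mem
  by_cases hbL : b ∈ L
  · have hbN := hXN b hbX' ((hX b).2 ⟨hbL, hBR hb⟩)
    exact bad b hbN (JoinIn.refl (hN b hbN).1)
  · obtain ⟨u, v, huv, hu, hv, huX', hvX'⟩ := hab.symm.boundary
      {u | JoinIn G {v | v ∉ L ∧ v ∉ X'} b u} (JoinIn.refl ⟨hbL, hbX'⟩)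
      (fun h => h.right_mem.1 (hAL ha))
    have huL : u ∉ L := hu.right_mem.1
    have hvR : v ∈ R := by
      rcases hadj u v huv with h | h
      exacts [absurd h.1 huL, h.2]
    by_cases hvL : v ∈ L
    · have hvN := hXN v hvX' ((hX v).2 ⟨hvL, hvR⟩)
      refine bad v hvN ((hu.mono fun z hz => hbagL z hz.2 hz.1).trans
        (JoinIn.of_adj huv (hbagL u huX' huL) (hN v hvN).1))
    · exact hv (hu.trans (JoinIn.of_adj huv ⟨huL, huX'⟩ ⟨hvL, hvX'⟩))

/-- For a separator `X` of fewer than `k` vertices closest to the root, the new bag `W` at the node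
`c` is smaller than the old one as soon as it contains new vertices: otherwise exchanging these
for the vertices removed from the bag would bring the separator closer to the root. -/
lemma IsTD.card_side {V ι : Type*} [DecidableEq V] {G : SimpleGraph V} {T : SimpleGraph ι}
    {bag : ι → Finset V} (h : IsTD G T bag) {t c : ι} {δ : ι → ℕ} {d : V → ℕ} {s : V → ι}
    (hs : ∀ v, v ∈ bag (s v)) (hd : ∀ v c, v ∈ bag c → d v ≤ δ c)
    {A B X L R N W : Finset V} {k : ℕ} (hB : B ⊆ bag t) (hAL : A ⊆ L) (hBR : B ⊆ R)
    (hX : ∀ v, v ∈ X ↔ v ∈ L ∧ v ∈ R)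
    (hadj : ∀ u v, G.Adj u v → (u ∈ L ∧ v ∈ L) ∨ (u ∈ R ∧ v ∈ R))
    (hXk : X.card < k)
    (hmin : ∀ Y, Separates G A B Y → Y.card < k → ∑ v ∈ X, d v ≤ ∑ v ∈ Y, d v)
    (hNX : N ⊆ X)
    (hN : ∀ v ∈ N, v ∉ bag c ∧ ¬ JoinIn T {b | b ≠ c} t (s v))
    (hNd : ∀ v ∈ N, δ c < d v) (hne : N.Nonempty)
    (hW : W ⊆ (bag c ∩ L) ∪ N) : W.card < (bag c).card := by
  have hlt : N.card < (bag c \ L).card := by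
    by_contra! hle
    have hcard := Finset.card_union_le (X \ N) (bag c \ L)
    have hXN := Finset.card_sdiff_add_card_eq_card hNX
    have hm := hmin _ (h.separates_shift hs hB hAL hBR hX hadj hN) (by omega)
    have h1 : ∑ v ∈ (X \ N) ∪ (bag c \ L), d v ≤ ∑ v ∈ X \ N, d v + ∑ v ∈ bag c \ L, d v := by
      rw [← Finset.sum_union_inter]
      exact Nat.le_add_right _ _
    have h2 : ∑ v ∈ X \ N, d v + ∑ v ∈ N, d v = ∑ v ∈ X, d v := Finset.sum_sdiff hNX
    have h3 : ∑ v ∈ bag c \ L, d v ≤ (bag c \ L).card * δ c := by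
      rw [← smul_eq_mul]
      exact Finset.sum_le_card_nsmul _ _ _ fun v hv => hd v c (Finset.mem_sdiff.1 hv).1
    have h4 : N.card * δ c < ∑ v ∈ N, d v := by
      rw [← smul_eq_mul, ← Finset.sum_const]
      exact Finset.sum_lt_sum_of_nonempty hne hNd
    have h5 : (bag c \ L).card * δ c ≤ N.card * δ c := Nat.mul_le_mul_right _ hle
    omega
  have h1 := Finset.card_le_card hW
  have h2 := Finset.card_union_le (bag c ∩ L) N
  have h3 := Finset.card_inter_add_card_sdiff (bag c) L
  omega

/-- A bag of maximum size that is not well-linked can be replaced: there is a decomposition of no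
larger width with fewer bags of that size. -/
lemma IsTD.improve {V ι : Type*} [Fintype V] [Fintype ι] {G : SimpleGraph V} {T : SimpleGraph ι}
    {bag : ι → Finset V} (h : IsTD G T bag) {w : ℕ} (hw : ∀ b, (bag b).card ≤ w) {t : ι}
    (ht : (bag t).card = w) (hnl : ¬ WellLinked G (bag t)) :
    ∃ (T' : SimpleGraph (ι ⊕ ι)) (bag' : ι ⊕ ι → Finset V), IsTD G T' bag' ∧
      (∀ b, (bag' b).card ≤ w) ∧
      ∑ b, (if (bag' b).card = w then 1 else 0) < ∑ b, if (bag b).card = w then 1 else 0 := by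
  classical
  obtain ⟨A, B, hA, hB, hAB, X₀, hX₀, hX₀k⟩ : ∃ A B : Finset V, A ⊆ bag t ∧ B ⊆ bag t ∧
      A.card = B.card ∧ ∃ X, Separates G A B X ∧ X.card < A.card := by
    by_contra! hcon
    exact hnl fun A B hA hB _ hAB =>
      (menger A.card G A B (hcon A B hA hB hAB)).matching hAB
  obtain ⟨δ, d, s, P, hs, hsP, htP, hP, hcut, hδ, hd⟩ := h.exists_rooting t
  -- Among the separators of fewer than `|A|` vertices, one with smallest total distance.
  obtain ⟨X, hXmem, hXmin⟩ := Finset.exists_min_image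
    (Finset.univ.filter fun X => Separates G A B X ∧ X.card < A.card)
    (fun X => ∑ v ∈ X, d v) ⟨X₀, by simp [hX₀, hX₀k]⟩
  obtain ⟨hXsep, hXk⟩ := (Finset.mem_filter.1 hXmem).2
  have hmin : ∀ Y, Separates G A B Y → Y.card < A.card → ∑ v ∈ X, d v ≤ ∑ v ∈ Y, d v :=
    fun Y hY hYk => hXmin Y (by simp [hY, hYk])
  have hmin' : ∀ Y, Separates G B A Y → Y.card < A.card → ∑ v ∈ X, d v ≤ ∑ v ∈ Y, d v :=
    fun Y hY hYk => hmin Y hY.symm hYk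
  obtain ⟨L, R, hAL, hBR, hX, hLR, hadj⟩ := hXsep.exists_sides
  let W₁ : ι → Finset V := fun c => L.filter fun v => v ∈ bag c ∨ v ∈ R ∧ c ∈ P v
  let W₂ : ι → Finset V := fun c => R.filter fun v => v ∈ bag c ∨ v ∈ L ∧ c ∈ P v
  let N : ι → Finset V := fun c => X.filter fun v => v ∉ bag c ∧ c ∈ P v
  have hW₁ : ∀ c v, v ∈ W₁ c ↔ v ∈ L ∧ (v ∈ bag c ∨ v ∈ R ∧ c ∈ P v) := fun c v =>
    Finset.mem_filter
  have hW₂ : ∀ c v, v ∈ W₂ c ↔ v ∈ R ∧ (v ∈ bag c ∨ v ∈ L ∧ c ∈ P v) := fun c v =>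
    Finset.mem_filter
  have hNmem : ∀ c v, v ∈ N c ↔ v ∈ X ∧ v ∉ bag c ∧ c ∈ P v := fun c v => Finset.mem_filter
  have hW₁N : ∀ c, W₁ c ⊆ (bag c ∩ L) ∪ N c := fun c v hv => by
    have := (hW₁ c v).1 hv
    rw [Finset.mem_union, Finset.mem_inter, hNmem, hX]
    tauto
  have hW₂N : ∀ c, W₂ c ⊆ (bag c ∩ R) ∪ N c := fun c v hv => by
    have := (hW₂ c v).1 hv
    rw [Finset.mem_union, Finset.mem_inter, hNmem, hX]
    tauto
  have hsmall : ∀ c, (N c).Nonempty →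
      (W₁ c).card < (bag c).card ∧ (W₂ c).card < (bag c).card := fun c hne =>
    have hN : ∀ v ∈ N c, v ∉ bag c ∧ ¬ JoinIn T {b | b ≠ c} t (s v) := fun v hv =>
      ⟨((hNmem c v).1 hv).2.1, hcut v c ((hNmem c v).1 hv).2.2⟩
    have hNd : ∀ v ∈ N c, δ c < d v := fun v hv =>
      hδ v c ((hNmem c v).1 hv).2.2 ((hNmem c v).1 hv).2.1
    ⟨h.card_side hs hd hB hAL hBR hX hadj hXk hmin (Finset.filter_subset _ _) hN hNd hne (hW₁N c),
      h.card_side hs hd hA hBR hAL (fun v => (hX v).trans and_comm)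
        (fun u v huv => (hadj u v huv).symm) hXk hmin' (Finset.filter_subset _ _) hN hNd hne
        (hW₂N c)⟩
  have hsub : ∀ c, ¬ (N c).Nonempty → W₁ c ⊆ bag c ∩ L ∧ W₂ c ⊆ bag c ∩ R := fun c hne => by
    have h1 := hW₁N c
    have h2 := hW₂N c
    rw [Finset.not_nonempty_iff_eq_empty.1 hne, Finset.union_empty] at h1 h2
    exact ⟨h1, h2⟩
  have hle : ∀ c, (W₁ c).card ≤ (bag c).card ∧ (W₂ c).card ≤ (bag c).card := fun c => by
    by_cases hne : (N c).Nonempty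
    · exact ⟨(hsmall c hne).1.le, (hsmall c hne).2.le⟩
    · exact ⟨Finset.card_le_card ((hsub c hne).1.trans Finset.inter_subset_left),
        Finset.card_le_card ((hsub c hne).2.trans Finset.inter_subset_left)⟩
  -- A new bag of full size contains the whole old bag, which then lies on one side.
  have hside : ∀ c, (bag c).card = w →
      ((W₁ c).card = w → bag c ⊆ L) ∧ ((W₂ c).card = w → bag c ⊆ R) := fun c hc => by
    by_cases hne : (N c).Nonempty
    · have := hsmall c hne
      exact ⟨fun e => by omega, fun e => by omega⟩
    · obtain ⟨h1, h2⟩ := hsub c hne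
      refine ⟨fun e => ?_, fun e => ?_⟩
      · rw [← Finset.eq_of_subset_of_card_le (h1.trans Finset.inter_subset_left) (by omega)]
        exact h1.trans Finset.inter_subset_right
      · rw [← Finset.eq_of_subset_of_card_le (h2.trans Finset.inter_subset_left) (by omega)]
        exact h2.trans Finset.inter_subset_right
  have hbig : ∀ C : Finset V, C ⊆ L → C ⊆ R → C.card < A.card := fun C h1 h2 =>
    (Finset.card_le_card fun v hv => (hX v).2 ⟨h1 hv, h2 hv⟩).trans_lt hXk
  have hAw := Finset.card_le_card hA
  refine ⟨_, _, h.split t s P hs hsP htP hP hLR hadj hW₁ hW₂, ?_, ?_⟩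
  · rintro (c | c)
    exacts [(hle c).1.trans (hw c), (hle c).2.trans (hw c)]
  · rw [Fintype.sum_sum_type]
    simp only [Sum.elim_inl, Sum.elim_inr]
    rw [← Finset.sum_add_distrib]
    refine Finset.sum_lt_sum (fun c _ => ?_) ⟨t, Finset.mem_univ _, ?_⟩
    · have h1 := hle c
      have h2 := hw c
      by_cases hc : (bag c).card = w
      · have h3 : ¬ ((W₁ c).card = w ∧ (W₂ c).card = w) := fun ⟨e1, e2⟩ => by
          have := hbig _ ((hside c hc).1 e1) ((hside c hc).2 e2)
          omega
        by_cases e1 : (W₁ c).card = w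
        · have e2 : (W₂ c).card ≠ w := fun e2 => h3 ⟨e1, e2⟩
          simp [hc, e1, e2]
        · by_cases e2 : (W₂ c).card = w <;> simp [hc, e1, e2]
      · have e1 : (W₁ c).card ≠ w := by omega
        have e2 : (W₂ c).card ≠ w := by omega
        simp [hc, e1, e2]
    · have h1 : (W₁ t).card ≠ w := fun e =>
        absurd (hbig B (hB.trans ((hside t ht).1 e)) hBR) (by omega)
      have h2 : (W₂ t).card ≠ w := fun e =>
        absurd (hbig A hAL (hA.trans ((hside t ht).2 e))) (by omega)
      simp [h1, h2, ht]

/-- Every (finite, nonempty) graph `H` of treewidth `tw` contains a well-linked set of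
size `tw + 1`. -/
theorem exists_wellLinked_set {V : Type*} [Fintype V] [Nonempty V] (H : SimpleGraph V) :
    ∃ Q : Finset V, Q.card = treewidth H + 1 ∧ WellLinked H Q := by
  classical
  have hne : {w | ∃ (n : ℕ) (T : SimpleGraph (Fin n)) (bag : Fin n → Finset V),
      IsTreeDecomp H T bag ∧ ∀ b, (bag b).card ≤ w + 1}.Nonempty := by
    have htriv : IsTD H (⊥ : SimpleGraph (Fin 1)) (fun _ => Finset.univ) := by
      refine ⟨⟨fun x y => ?_⟩, IsAcyclic.of_subsingleton, by simp, by simp, fun v x y _ _ => ?_⟩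
      · rw [Subsingleton.elim x y]
      · rw [Subsingleton.elim x y]
        exact JoinIn.refl (by simp)
    exact ⟨Fintype.card V, 1, _, _, htriv.isTreeDecomp (Equiv.refl _), fun b => by simp⟩
  set w := treewidth H with hw
  -- A decomposition of optimal width with as few largest bags as possible.
  let count : ℕ → Prop := fun m => ∃ (n : ℕ) (T : SimpleGraph (Fin n)) (bag : Fin n → Finset V),
    IsTreeDecomp H T bag ∧ (∀ b, (bag b).card ≤ w + 1) ∧
      ∑ b, (if (bag b).card = w + 1 then 1 else 0) = m
  have hcount : ∃ m, count m := by
    obtain ⟨n, T, bag, hT, hb⟩ := Nat.sInf_mem hne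
    exact ⟨_, n, T, bag, hT, hb, rfl⟩
  obtain ⟨n, T, bag, hT, hb, hm⟩ := Nat.find_spec hcount
  obtain ⟨t, ht⟩ : ∃ t, (bag t).card = w + 1 := by
    by_contra! hcon
    have hlt : ∀ b, (bag b).card ≤ w := fun b => by
      have h1 := hb b
      have h2 := hcon b
      omega
    obtain ⟨v⟩ := ‹Nonempty V›
    obtain ⟨b, hvb⟩ := hT.2.2.1 v
    have hpos : 0 < w := (Finset.card_pos.2 ⟨v, hvb⟩).trans_le (hlt b)
    have : w ≤ w - 1 := Nat.sInf_le ⟨n, T, bag, hT, fun b => (hlt b).trans (by omega)⟩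
    omega
  refine ⟨bag t, ht, ?_⟩
  by_contra hnl
  obtain ⟨T', bag', hT', hb', hlt⟩ := hT.isTD.improve hb ht hnl
  let e : Fin n ⊕ Fin n ≃ Fin (n + n) := finSumFinEquiv
  refine Nat.find_min hcount (hm ▸ hlt) ⟨_, _, _, hT'.isTreeDecomp e, fun b => hb' _, ?_⟩
  exact Equiv.sum_comp e.symm fun b => if (bag' b).card = w + 1 then 1 else 0
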